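/- arXiv:1611.05427 — 2 statements merged into one kernel-verified Lean document; each statement's English description precedes it below -/
import Mathlib

section
/- Let n ≥ 1, let λ : Fin n → ℝ, and for smooth functions v : ℂⁿ → ℂ define ∂̄_j v = ∂v/∂z̄_j + λ_j z_j v and δ_j v = −∂v/∂z_j + λ_j z̄_j v − z̄_j v. Then for every smooth compactly supported v : ℂⁿ → ℂ and every index j, one has the weighted L² norm identity ∫_{ℂⁿ} |δ_j v|² e^{|z|²} dλ(z) − ∫_{ℂⁿ} |∂̄_j v|² e^{|z|²} dλ(z) = (−1 + 2λ_j) ∫_{ℂⁿ} |v|² e^{|z|²} dλ(z). -/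
open MeasureTheory Complex Finset

noncomputable section

/-- Wirtinger derivative `∂v/∂z̄_j = (1/2)(∂/∂x_j + i ∂/∂y_j) v` on `ℂⁿ`. -/
def wbar {n : ℕ} (j : Fin n) (v : (Fin n → ℂ) → ℂ) (z : Fin n → ℂ) : ℂ :=
  (1 / 2 : ℂ) * (fderiv ℝ v z (Pi.single j 1) + Complex.I * fderiv ℝ v z (Pi.single j Complex.I))

/-- Wirtinger derivative `∂v/∂z_j = (1/2)(∂/∂x_j − i ∂/∂y_j) v` on `ℂⁿ`. -/
def whol {n : ℕ} (j : Fin n) (v : (Fin n → ℂ) → ℂ) (z : Fin n → ℂ) : ℂ :=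
  (1 / 2 : ℂ) * (fderiv ℝ v z (Pi.single j 1) - Complex.I * fderiv ℝ v z (Pi.single j Complex.I))

/-- The operator `∂̄_j v = ∂v/∂z̄_j + λ_j z_j v`. -/
def dbarOp {n : ℕ} (lam : Fin n → ℝ) (j : Fin n) (v : (Fin n → ℂ) → ℂ) (z : Fin n → ℂ) : ℂ :=
  wbar j v z + (lam j : ℂ) * z j * v z

/-- The operator `δ_j v = −∂v/∂z_j + λ_j z̄_j v − z̄_j v`. -/
def deltaOp {n : ℕ} (lam : Fin n → ℝ) (j : Fin n) (v : (Fin n → ℂ) → ℂ) (z : Fin n → ℂ) : ℂ :=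
  - whol j v z + (lam j : ℂ) * (starRingEnd ℂ) (z j) * v z - (starRingEnd ℂ) (z j) * v z

/-- The weight `e^{|z|²}`. -/
def wgt {n : ℕ} (z : Fin n → ℂ) : ℝ := Real.exp (∑ j, Complex.normSq (z j))

/-!
In the space `L²(ℂⁿ, e^{|z|²})` the operator `δ_j` is the formal adjoint of `∂̄_j`: the difference
of the two integrands in `⟨∂̄_j u, v⟩ - ⟨u, δ_j v⟩` is `∂/∂z̄_j (u v̄ e^{|z|²})`, which integrates to
zero. Moving both operators across the pairing turns
`⟨δ_k u, δ_j v⟩ - ⟨∂̄_j u, ∂̄_k v⟩` into `⟨(∂̄_j δ_k - δ_k ∂̄_j) u, v⟩`, and since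
`∂̄_j δ_k - δ_k ∂̄_j` differs from the vanishing commutator of constant-coefficient operators only
through `∂z_j/∂z_k` and `∂z̄_k/∂z̄_j`, it is multiplication by `2λ_j - 1` when `j = k` and by `0`
otherwise.
-/

open scoped ComplexConjugate

section FDeriv

variable {E F : Type*} [NormedAddCommGroup E] [NormedSpace ℝ E]
  [NormedAddCommGroup F] [NormedSpace ℝ F]

lemma integral_fderiv_apply_eq_zero [FiniteDimensional ℝ E] [MeasurableSpace E] [BorelSpace E]
    {μ : Measure E} [μ.IsAddHaarMeasure] {f : E → F} {u : E} (hf : Differentiable ℝ f)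
    (hfi : Integrable f μ) (hf'i : Integrable (fun x => fderiv ℝ f x u) μ) :
    ∫ x, fderiv ℝ f x u ∂μ = 0 := by
  simpa using integral_smul_fderiv_eq_neg_fderiv_smul_of_integrable (μ := μ) (𝕜 := ℝ)
    (f := fun _ => 1) (g := f) (v := u) (by simp) (by simpa using hf'i) (by simpa using hfi)
    (by fun_prop) (fun x _ => hf x)

lemma differentiableAt_fderiv_apply {f : E → F} {x : E} (hf : ContDiffAt ℝ 2 f x) (u : E) :
    DifferentiableAt ℝ (fun y => fderiv ℝ f y u) x :=
  ((hf.fderiv_right one_add_one_eq_two.le).differentiableAt one_ne_zero).clm_apply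
    (differentiableAt_const u)

lemma fderiv_fderiv_apply_comm {f : E → F} {x : E} (hf : ContDiffAt ℝ 2 f x) (u w : E) :
    fderiv ℝ (fun y => fderiv ℝ f y u) x w = fderiv ℝ (fun y => fderiv ℝ f y w) x u := by
  have hd : DifferentiableAt ℝ (fderiv ℝ f) x :=
    (hf.fderiv_right one_add_one_eq_two.le).differentiableAt one_ne_zero
  have hsymm : IsSymmSndFDerivAt ℝ f x := hf.isSymmSndFDerivAt (by simp)
  simpa [fderiv_clm_apply hd] using hsymm w u

end FDeriv

section Wirtinger

variable {n : ℕ} {j k : Fin n} {f g u v : (Fin n → ℂ) → ℂ} {z : Fin n → ℂ} {lam : Fin n → ℝ}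
  {m p : WithTop ℕ∞}

lemma contDiff_wbar (hf : ContDiff ℝ p f) (hmp : m + 1 ≤ p) : ContDiff ℝ m (wbar j f) := by
  have hdir (w : Fin n → ℂ) : ContDiff ℝ m (fun z => fderiv ℝ f z w) :=
    (hf.fderiv_right hmp).clm_apply contDiff_const
  exact contDiff_const.mul ((hdir _).add (contDiff_const.mul (hdir _)))

lemma contDiff_whol (hf : ContDiff ℝ p f) (hmp : m + 1 ≤ p) : ContDiff ℝ m (whol j f) := by
  have hdir (w : Fin n → ℂ) : ContDiff ℝ m (fun z => fderiv ℝ f z w) :=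
    (hf.fderiv_right hmp).clm_apply contDiff_const
  exact contDiff_const.mul ((hdir _).sub (contDiff_const.mul (hdir _)))

lemma hasCompactSupport_wbar (hf : HasCompactSupport f) : HasCompactSupport (wbar j f) :=
  ((hf.fderiv_apply ℝ _).add (hf.fderiv_apply ℝ _).mul_left).mul_left

lemma hasCompactSupport_whol (hf : HasCompactSupport f) : HasCompactSupport (whol j f) :=
  ((hf.fderiv_apply ℝ _).sub (hf.fderiv_apply ℝ _).mul_left).mul_left

lemma wbar_add (hf : DifferentiableAt ℝ f z) (hg : DifferentiableAt ℝ g z) :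
    wbar j (fun y => f y + g y) z = wbar j f z + wbar j g z := by
  simp only [wbar, fderiv_fun_add hf hg, add_apply]
  ring

lemma wbar_neg : wbar j (fun y => -f y) z = -wbar j f z := by
  simp only [wbar, fderiv_fun_neg, neg_apply]
  ring

lemma wbar_mul (hf : DifferentiableAt ℝ f z) (hg : DifferentiableAt ℝ g z) :
    wbar j (fun y => f y * g y) z = wbar j f z * g z + f z * wbar j g z := by
  simp only [wbar, fderiv_fun_mul hf hg, add_apply, smul_apply, smul_eq_mul]
  ring

lemma wbar_const_mul (c : ℂ) (hf : DifferentiableAt ℝ f z) :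
    wbar j (fun y => c * f y) z = c * wbar j f z := by
  simp only [wbar, fderiv_const_mul hf, smul_apply, smul_eq_mul]
  ring

lemma wbar_sum {ι : Type*} {s : Finset ι} {f : ι → (Fin n → ℂ) → ℂ}
    (hf : ∀ i ∈ s, DifferentiableAt ℝ (f i) z) :
    wbar j (fun y => ∑ i ∈ s, f i y) z = ∑ i ∈ s, wbar j (f i) z := by
  simp only [wbar, fderiv_fun_sum hf, _root_.sum_apply, mul_sum, sum_add_distrib, mul_add]

lemma wbar_cexp (hf : DifferentiableAt ℝ f z) :
    wbar j (fun y => exp (f y)) z = exp (f z) * wbar j f z := by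
  simp only [wbar, hf.hasFDerivAt.cexp.fderiv, smul_apply, smul_eq_mul]
  ring

lemma whol_add (hf : DifferentiableAt ℝ f z) (hg : DifferentiableAt ℝ g z) :
    whol j (fun y => f y + g y) z = whol j f z + whol j g z := by
  simp only [whol, fderiv_fun_add hf hg, add_apply]
  ring

lemma whol_mul (hf : DifferentiableAt ℝ f z) (hg : DifferentiableAt ℝ g z) :
    whol j (fun y => f y * g y) z = whol j f z * g z + f z * whol j g z := by
  simp only [whol, fderiv_fun_mul hf hg, add_apply, smul_apply, smul_eq_mul]
  ring

lemma whol_const_mul (c : ℂ) (hf : DifferentiableAt ℝ f z) :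
    whol j (fun y => c * f y) z = c * whol j f z := by
  simp only [whol, fderiv_const_mul hf, smul_apply, smul_eq_mul]
  ring

lemma wbar_conj : wbar j (fun y => conj (f y)) z = conj (whol j f z) := by
  have hconj (w) : fderiv ℝ (fun y => conj (f y)) z w = conj (fderiv ℝ f z w) := by
    change fderiv ℝ (fun y => star (f y)) z w = _
    rw [fderiv_star]
    rfl
  simp only [wbar, whol, hconj, map_mul, map_sub, map_div₀, map_one, map_ofNat, conj_I]
  ring

lemma fderiv_coord (w : Fin n → ℂ) : fderiv ℝ (fun y : Fin n → ℂ => y k) z w = w k := by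
  rw [(hasFDerivAt_apply k z).fderiv]
  rfl

lemma wbar_coord : wbar j (fun y => y k) z = 0 := by
  obtain rfl | hjk := eq_or_ne k j
  · simp [wbar, fderiv_coord]
  · simp [wbar, fderiv_coord, hjk]

lemma whol_coord : whol j (fun y => y k) z = if j = k then 1 else 0 := by
  obtain rfl | hjk := eq_or_ne j k
  · norm_num [whol, fderiv_coord]
  · simp [whol, fderiv_coord, hjk.symm, hjk]

lemma wbar_conj_coord : wbar j (fun y => conj (y k)) z = if j = k then 1 else 0 := by
  rw [wbar_conj, whol_coord]
  split_ifs <;> simp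

lemma fderiv_whol_apply (hf : ContDiff ℝ 2 f) (w : Fin n → ℂ) :
    fderiv ℝ (whol k f) z w = whol k (fun y => fderiv ℝ f y w) z := by
  have hd (a) : DifferentiableAt ℝ (fun y => fderiv ℝ f y a) z :=
    differentiableAt_fderiv_apply hf.contDiffAt a
  unfold whol
  rw [fderiv_const_mul ((hd _).fun_sub ((hd _).const_mul _)),
    fderiv_fun_sub (hd _) ((hd _).const_mul _), fderiv_const_mul (hd _)]
  simp only [smul_apply, sub_apply, smul_eq_mul, fderiv_fderiv_apply_comm hf.contDiffAt _ w]

lemma wbar_whol_comm (hf : ContDiff ℝ 2 f) : wbar j (whol k f) z = whol k (wbar j f) z := by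
  have hd (a) : DifferentiableAt ℝ (fun y => fderiv ℝ f y a) z :=
    differentiableAt_fderiv_apply hf.contDiffAt a
  unfold wbar
  rw [whol_const_mul _ ((hd _).fun_add ((hd _).const_mul _)), whol_add (hd _) ((hd _).const_mul _),
    whol_const_mul _ (hd _), fderiv_whol_apply hf, fderiv_whol_apply hf]

lemma integral_wbar_eq_zero (hf : ContDiff ℝ 1 f) (hfc : HasCompactSupport f) :
    ∫ z, wbar j f z = 0 := by
  have hf'i (w : Fin n → ℂ) : Integrable (fun z => fderiv ℝ f z w) :=
    ((hf.continuous_fderiv one_ne_zero).clm_apply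
      continuous_const).integrable_of_hasCompactSupport (hfc.fderiv_apply ℝ w)
  have hzero (w : Fin n → ℂ) : ∫ z, fderiv ℝ f z w = 0 :=
    integral_fderiv_apply_eq_zero (hf.differentiable one_ne_zero)
      (hf.continuous.integrable_of_hasCompactSupport hfc) (hf'i w)
  unfold wbar
  rw [integral_const_mul, integral_add (hf'i _) ((hf'i _).const_mul I), integral_const_mul,
    hzero, hzero, mul_zero, add_zero, mul_zero]

lemma contDiff_conj_coord : ContDiff ℝ m (fun z : Fin n → ℂ => conj (z k)) :=
  conjCLE.contDiff.comp (contDiff_apply ℝ ℂ k)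

lemma ofReal_wgt : (wgt z : ℂ) = exp (∑ i, z i * conj (z i)) := by
  simp [wgt, mul_conj]

lemma contDiff_ofReal_wgt : ContDiff ℝ m (fun z : Fin n → ℂ => (wgt z : ℂ)) := by
  simp only [ofReal_wgt]
  exact .cexp (.sum fun i _ => (contDiff_apply ℝ ℂ i).mul contDiff_conj_coord)

lemma wbar_ofReal_wgt : wbar j (fun y => (wgt y : ℂ)) z = z j * wgt z := by
  have hc (i : Fin n) : DifferentiableAt ℝ (fun y : Fin n → ℂ => conj (y i)) z :=
    contDiff_conj_coord.differentiable one_ne_zero z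
  have hd (i : Fin n) : DifferentiableAt ℝ (fun y : Fin n → ℂ => y i * conj (y i)) z :=
    (differentiableAt_apply i z).mul (hc i)
  simp only [ofReal_wgt]
  rw [wbar_cexp (.fun_sum fun i _ => hd i), wbar_sum fun i _ => hd i]
  simp only [wbar_mul (differentiableAt_apply _ z) (hc _), wbar_coord, wbar_conj_coord]
  simp [mul_comm]

lemma contDiff_dbarOp (hv : ContDiff ℝ p v) (hmp : m + 1 ≤ p) :
    ContDiff ℝ m (dbarOp lam j v) := by
  have hv' := contDiff_wbar (j := j) hv hmp
  have hvm := hv.of_le (le_self_add.trans hmp)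
  unfold dbarOp
  fun_prop

lemma deltaOp_eq : deltaOp lam j v =
    fun z => -whol j v z + (lam j - 1) * (conj (z j) * v z) := by
  funext z
  rw [deltaOp]
  ring

lemma contDiff_deltaOp (hv : ContDiff ℝ p v) (hmp : m + 1 ≤ p) :
    ContDiff ℝ m (deltaOp lam j v) := by
  have hv' := contDiff_whol (j := j) hv hmp
  have hvm := hv.of_le (le_self_add.trans hmp)
  have hc := contDiff_conj_coord (k := j) (m := m)
  rw [deltaOp_eq]
  fun_prop

lemma hasCompactSupport_dbarOp (hv : HasCompactSupport v) :
    HasCompactSupport (dbarOp lam j v) :=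
  (hasCompactSupport_wbar hv).add hv.mul_left

lemma hasCompactSupport_deltaOp (hv : HasCompactSupport v) :
    HasCompactSupport (deltaOp lam j v) :=
  ((hasCompactSupport_whol hv).neg.add hv.mul_left).sub hv.mul_left

lemma wbar_deltaOp (hv : ContDiff ℝ 2 v) :
    wbar j (deltaOp lam k v) z = -wbar j (whol k v) z +
      (lam k - 1) * ((if j = k then 1 else 0) * v z + conj (z k) * wbar j v z) := by
  have hvz : DifferentiableAt ℝ v z := hv.differentiable two_ne_zero z
  have hwhol : DifferentiableAt ℝ (whol k v) z :=
    (contDiff_whol hv one_add_one_eq_two.le).differentiable one_ne_zero z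
  have hconj : DifferentiableAt ℝ (fun y : Fin n → ℂ => conj (y k)) z :=
    contDiff_conj_coord.differentiable one_ne_zero z
  rw [deltaOp_eq, wbar_add hwhol.fun_neg ((hconj.fun_mul hvz).const_mul _), wbar_neg,
    wbar_const_mul _ (hconj.fun_mul hvz), wbar_mul hconj hvz, wbar_conj_coord]

lemma whol_dbarOp (hv : ContDiff ℝ 2 v) :
    whol k (dbarOp lam j v) z = whol k (wbar j v) z +
      lam j * ((if k = j then 1 else 0) * v z + z j * whol k v z) := by
  have hvz : DifferentiableAt ℝ v z := hv.differentiable two_ne_zero z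
  have hwbar : DifferentiableAt ℝ (wbar j v) z :=
    (contDiff_wbar hv one_add_one_eq_two.le).differentiable one_ne_zero z
  have hcoord : DifferentiableAt ℝ (fun y : Fin n → ℂ => y j) z := differentiableAt_apply j z
  unfold dbarOp
  simp only [mul_assoc]
  rw [whol_add hwbar ((hcoord.fun_mul hvz).const_mul _), whol_const_mul _ (hcoord.fun_mul hvz),
    whol_mul hcoord hvz, whol_coord]

lemma dbarOp_deltaOp (hv : ContDiff ℝ 2 v) :
    dbarOp lam j (deltaOp lam k v) = fun z =>
      deltaOp lam k (dbarOp lam j v) z + (if j = k then 2 * lam j - 1 else 0 : ℝ) * v z := by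
  funext z
  have hdelta : deltaOp lam k (dbarOp lam j v) z =
      -whol k (dbarOp lam j v) z + (lam k - 1) * (conj (z k) * dbarOp lam j v z) :=
    congrFun deltaOp_eq z
  rw [hdelta, dbarOp, wbar_deltaOp hv, whol_dbarOp hv, wbar_whol_comm hv, dbarOp, deltaOp]
  obtain rfl | hjk := eq_or_ne j k
  · simp only [if_true]
    push_cast
    ring
  · simp only [hjk, hjk.symm, if_false, ofReal_zero]
    ring

/-- The sesquilinear pairing `∫ u v̄ e^{|z|²}` of the weighted space `L²(ℂⁿ, e^{|z|²})`, for
which `deltaOp` is the formal adjoint of `dbarOp`; it is conjugate linear in the second argument,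
and takes the junk value `0` when the integrand is not integrable. -/
def wgtInner (u v : (Fin n → ℂ) → ℂ) : ℂ :=
  ∫ z, u z * conj (v z) * wgt z

lemma wgtInner_self : wgtInner v v = (∫ z, ‖v z‖ ^ 2 * wgt z : ℝ) := by
  simp [wgtInner, mul_conj', ← integral_complex_ofReal]

lemma conj_wgtInner : conj (wgtInner u v) = wgtInner v u := by
  simp only [wgtInner, ← integral_conj, map_mul, conj_conj, conj_ofReal, mul_comm]

lemma integrable_mul_conj_mul_wgt (hu : Continuous u) (hv : Continuous v)
    (hvc : HasCompactSupport v) : Integrable (fun z => u z * conj (v z) * wgt z) :=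
  ((hu.mul (continuous_conj.comp hv)).mul
    (contDiff_ofReal_wgt (m := 0)).continuous).integrable_of_hasCompactSupport
      (hvc.comp_left (map_zero conj)).mul_left.mul_right

lemma wgtInner_add_left {u₁ u₂ : (Fin n → ℂ) → ℂ} (hu₁ : Continuous u₁) (hu₂ : Continuous u₂)
    (hv : Continuous v) (hvc : HasCompactSupport v) :
    wgtInner (fun z => u₁ z + u₂ z) v = wgtInner u₁ v + wgtInner u₂ v := by
  simp only [wgtInner, add_mul]
  exact integral_add (integrable_mul_conj_mul_wgt hu₁ hv hvc)
    (integrable_mul_conj_mul_wgt hu₂ hv hvc)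

lemma wgtInner_const_mul_left (c : ℂ) : wgtInner (fun z => c * u z) v = c * wgtInner u v := by
  simp only [wgtInner, mul_assoc, integral_const_mul]

lemma wbar_mul_conj_mul_wgt (hu : DifferentiableAt ℝ u z) (hv : DifferentiableAt ℝ v z) :
    wbar j (fun y => u y * conj (v y) * wgt y) z =
      dbarOp lam j u z * conj (v z) * wgt z - u z * conj (deltaOp lam j v z) * wgt z := by
  have hvc : DifferentiableAt ℝ (fun y => conj (v y)) z := hv.star
  have hw : DifferentiableAt ℝ (fun y : Fin n → ℂ => (wgt y : ℂ)) z :=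
    contDiff_ofReal_wgt.differentiable one_ne_zero z
  rw [wbar_mul (hu.fun_mul hvc) hw, wbar_mul hu hvc, wbar_conj, wbar_ofReal_wgt]
  simp only [dbarOp, deltaOp, map_sub, map_add, map_neg, map_mul, conj_conj, conj_ofReal]
  ring

lemma wgtInner_dbarOp_left (hu : ContDiff ℝ 1 u) (hv : ContDiff ℝ 1 v)
    (hvc : HasCompactSupport v) :
    wgtInner (dbarOp lam j u) v = wgtInner u (deltaOp lam j v) := by
  have hsmooth : ContDiff ℝ 1 (fun z => u z * conj (v z) * wgt z) :=
    (hu.mul (conjCLE.contDiff.comp hv)).mul contDiff_ofReal_wgt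
  have hsupp : HasCompactSupport (fun z => u z * conj (v z) * wgt z) :=
    (hvc.comp_left (map_zero conj)).mul_left.mul_right
  have hdbar := contDiff_dbarOp (lam := lam) (j := j) hu (zero_add 1).le
  have hdelta := contDiff_deltaOp (lam := lam) (j := j) hv (zero_add 1).le
  rw [← sub_eq_zero, wgtInner, wgtInner,
    ← integral_sub (integrable_mul_conj_mul_wgt hdbar.continuous hv.continuous hvc)
      (integrable_mul_conj_mul_wgt hu.continuous hdelta.continuous (hasCompactSupport_deltaOp hvc)),
    ← integral_wbar_eq_zero (j := j) hsmooth hsupp]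
  exact integral_congr_ae (.of_forall fun z => (wbar_mul_conj_mul_wgt
    (hu.differentiable one_ne_zero z) (hv.differentiable one_ne_zero z)).symm)

lemma wgtInner_deltaOp_left (hu : ContDiff ℝ 1 u) (hv : ContDiff ℝ 1 v)
    (huc : HasCompactSupport u) :
    wgtInner (deltaOp lam j u) v = wgtInner u (dbarOp lam j v) := by
  rw [← conj_wgtInner, ← wgtInner_dbarOp_left hv hu huc, conj_wgtInner]

lemma wgtInner_deltaOp_deltaOp (hu : ContDiff ℝ 2 u) (huc : HasCompactSupport u)
    (hv : ContDiff ℝ 1 v) (hvc : HasCompactSupport v) :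
    wgtInner (deltaOp lam k u) (deltaOp lam j v) =
      wgtInner (dbarOp lam j u) (dbarOp lam k v) +
        (if j = k then 2 * lam j - 1 else 0 : ℝ) * wgtInner u v := by
  have hdelta : ContDiff ℝ 1 (deltaOp lam k u) := contDiff_deltaOp hu one_add_one_eq_two.le
  have hdbar : ContDiff ℝ 1 (dbarOp lam j u) := contDiff_dbarOp hu one_add_one_eq_two.le
  have hdeltadbar : ContDiff ℝ 0 (deltaOp lam k (dbarOp lam j u)) :=
    contDiff_deltaOp hdbar (zero_add 1).le
  rw [← wgtInner_dbarOp_left hdelta hv hvc, dbarOp_deltaOp hu,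
    wgtInner_add_left hdeltadbar.continuous (hu.continuous.const_mul _) hv.continuous hvc,
    wgtInner_const_mul_left, wgtInner_deltaOp_left hdbar hv (hasCompactSupport_dbarOp huc)]

end Wirtinger

theorem norm_identity_general {n : ℕ} (lam : Fin n → ℝ) (j : Fin n)
    (v : (Fin n → ℂ) → ℂ) (hv : ContDiff ℝ 2 v) (hvcs : HasCompactSupport v) :
    (∫ z : Fin n → ℂ, ‖deltaOp lam j v z‖ ^ 2 * wgt z)
        - (∫ z : Fin n → ℂ, ‖dbarOp lam j v z‖ ^ 2 * wgt z)
      = (-1 + 2 * lam j) * ∫ z : Fin n → ℂ, ‖v z‖ ^ 2 * wgt z := by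
  have h := wgtInner_deltaOp_deltaOp (lam := lam) (j := j) (k := j) hv hvcs
    (hv.of_le one_le_two) hvcs
  simp only [wgtInner_self, if_true] at h
  norm_cast at h
  rw [h]
  ring

theorem norm_identity (n : ℕ) (hn : 1 ≤ n) (lam : Fin n → ℝ) (j : Fin n)
    (v : (Fin n → ℂ) → ℂ) (hv : ContDiff ℝ (⊤ : ℕ∞) v) (hvcs : HasCompactSupport v) :
    (∫ z : Fin n → ℂ, ‖deltaOp lam j v z‖ ^ 2 * wgt z)
        - (∫ z : Fin n → ℂ, ‖dbarOp lam j v z‖ ^ 2 * wgt z)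
      = (-1 + 2 * lam j) * ∫ z : Fin n → ℂ, ‖v z‖ ^ 2 * wgt z := by
  exact norm_identity_general lam j v (hv.of_le (WithTop.coe_le_coe.2 le_top)) hvcs
end
end

section
/- Let ε_1 = ε_2 = −1, ε_3 = ε_4 = 1, and on ℂ⁴ × ℝ with coordinates (z, x) consider the vector fields L̄_j = ∂/∂z̄_j − i ε_j z_j ∂/∂x, j = 1,...,4. Then for every smooth compactly supported u : ℂ⁴ × ℝ → ℂ, 4 ∫_{ℂ⁴×ℝ} |u|² e^{|z|²} dλ ≤ ∑_{j=1}^4 ∫_{ℂ⁴×ℝ} |L̄_j u|² e^{|z|²} dλ. -/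
open MeasureTheory Complex Finset

noncomputable section

/-- The signs ε₁ = ε₂ = −1, ε₃ = ε₄ = 1. -/
def eps : Fin 4 → ℝ := ![-1, -1, 1, 1]

/-- Wirtinger derivative `∂u/∂z̄_j` in the `z` variables on `ℂ⁴ × ℝ`. -/
def wbarP (j : Fin 4) (u : (Fin 4 → ℂ) × ℝ → ℂ) (p : (Fin 4 → ℂ) × ℝ) : ℂ :=
  (1 / 2 : ℂ) * (fderiv ℝ u p (Pi.single j 1, 0)
    + Complex.I * fderiv ℝ u p (Pi.single j Complex.I, 0))

/-- Wirtinger derivative `∂u/∂z_j` in the `z` variables on `ℂ⁴ × ℝ`. -/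
def wholP (j : Fin 4) (u : (Fin 4 → ℂ) × ℝ → ℂ) (p : (Fin 4 → ℂ) × ℝ) : ℂ :=
  (1 / 2 : ℂ) * (fderiv ℝ u p (Pi.single j 1, 0)
    - Complex.I * fderiv ℝ u p (Pi.single j Complex.I, 0))

/-- The derivative `∂u/∂x` in the real variable on `ℂ⁴ × ℝ`. -/
def dxP (u : (Fin 4 → ℂ) × ℝ → ℂ) (p : (Fin 4 → ℂ) × ℝ) : ℂ :=
  fderiv ℝ u p (0, 1)

/-- The vector field `L̄_j = ∂/∂z̄_j − i ε_j z_j ∂/∂x`. -/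
def Lbar (j : Fin 4) (u : (Fin 4 → ℂ) × ℝ → ℂ) (p : (Fin 4 → ℂ) × ℝ) : ℂ :=
  wbarP j u p - Complex.I * (eps j : ℂ) * p.1 j * dxP u p

/-- The vector field `L_j = ∂/∂z_j + i ε_j z̄_j ∂/∂x`. -/
def Lhol (j : Fin 4) (u : (Fin 4 → ℂ) × ℝ → ℂ) (p : (Fin 4 → ℂ) × ℝ) : ℂ :=
  wholP j u p + Complex.I * (eps j : ℂ) * (starRingEnd ℂ) (p.1 j) * dxP u p

/-- The weight `e^{|z|²}`. -/
def wgtP (p : (Fin 4 → ℂ) × ℝ) : ℝ := Real.exp (∑ j, Complex.normSq (p.1 j))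

/-!
Write `L̄ = ½ (V + i W)` and `L = ½ (V - i W)` with `V`, `W` real and divergence-free. Integrating
by parts against the weight `e^φ`, the adjoint of `L̄` is `L̄* = -(L + Lφ)`, and therefore
`‖L̄ u‖² = ‖L̄* u‖² + ⟨[L̄*, L̄] u, u⟩` with `[L̄*, L̄] u = (L̄ L φ) u - (i/2) [V, W] u`. For the
tangential Cauchy-Riemann fields and `φ = |z|²` one has `L̄_j L_j φ = 1` and
`[V_j, W_j] = -4 ε_j ∂/∂x`: since the signs `ε_j` add up to zero, the first-order terms cancel in
the sum over `j`, and each `j` contributes `‖u‖²`.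
-/

open ComplexConjugate VectorField

section Divergence

variable {E G : Type*} [NormedAddCommGroup E] [NormedSpace ℝ E]
  [NormedAddCommGroup G] [NormedSpace ℝ G]

/-- The divergence of a vector field on a finite-dimensional real vector space, encoded without
coordinates as the trace of the Fréchet derivative. -/
def divergence (V : E → E) (p : E) : ℝ :=
  LinearMap.trace ℝ E (fderiv ℝ V p)

lemma contDiff_fderiv_apply {f : E → G} {V : E → E} {n : ℕ∞} (hf : ContDiff ℝ (n + 1) f)
    (hV : ContDiff ℝ n V) : ContDiff ℝ n (fun p ↦ fderiv ℝ f p (V p)) :=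
  (hf.fderiv_right le_rfl).clm_apply hV

lemma integrable_fderiv_apply [MeasurableSpace E] [OpensMeasurableSpace E] {μ : Measure E}
    [IsFiniteMeasureOnCompacts μ] {f : E → G} {V : E → E} (hf : ContDiff ℝ 1 f)
    (hfs : HasCompactSupport f) (hV : Continuous V) :
    Integrable (fun p ↦ fderiv ℝ f p (V p)) μ :=
  ((hf.continuous_fderiv one_ne_zero).clm_apply hV).integrable_of_hasCompactSupport
    ((hfs.fderiv ℝ).mono fun p hp hfp ↦ hp (by simp [hfp]))

variable [FiniteDimensional ℝ E]

lemma divergence_eq_sum {ι : Type*} [Fintype ι] (b : Module.Basis ι ℝ E) {V : E → E} {p : E}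
    (hV : DifferentiableAt ℝ V p) :
    divergence V p = ∑ i, fderiv ℝ (fun q ↦ b.repr (V q) i) p (b i) := by
  classical
  have hcoord (i : ι) : fderiv ℝ (fun q ↦ b.repr (V q) i) p =
      (b.coord i).toContinuousLinearMap ∘L fderiv ℝ V p :=
    ((b.coord i).toContinuousLinearMap.hasFDerivAt.comp p hV.hasFDerivAt).fderiv
  simp [divergence, LinearMap.trace_eq_matrix_trace ℝ b, Matrix.trace, LinearMap.toMatrix_apply,
    hcoord]

variable [MeasurableSpace E] [BorelSpace E] (μ : Measure E) [μ.IsAddHaarMeasure]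

lemma integral_fderiv_eq_zero {f : E → G} (hf : ContDiff ℝ 1 f) (hfs : HasCompactSupport f)
    (v : E) : ∫ p, fderiv ℝ f p v ∂μ = 0 := by
  have hint : Integrable (fun p ↦ fderiv ℝ f p v) μ :=
    integrable_fderiv_apply hf hfs continuous_const
  simpa using integral_smul_fderiv_eq_neg_fderiv_smul_of_integrable (μ := μ) (𝕜 := ℝ)
    (f := fun _ ↦ 1) (g := f) (v := v) (by simp) (by simpa using hint)
    (by simpa using hf.continuous.integrable_of_hasCompactSupport hfs)
    (fun _ _ ↦ differentiableAt_const _) (fun p _ ↦ hf.differentiable one_ne_zero p)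

theorem integral_fderiv_apply_eq_neg_integral_divergence_smul {f : E → G} {V : E → E}
    (hf : ContDiff ℝ 1 f) (hfs : HasCompactSupport f) (hV : ContDiff ℝ 1 V) :
    ∫ p, fderiv ℝ f p (V p) ∂μ = -∫ p, divergence V p • f p ∂μ := by
  let b := Module.finBasis ℝ E
  have hcoord (i) : ContDiff ℝ 1 (fun p ↦ b.repr (V p) i) :=
    (b.coord i).toContinuousLinearMap.contDiff.comp hV
  have hcf (i) : ContDiff ℝ 1 (fun p ↦ b.repr (V p) i • f p) := (hcoord i).smul hf
  have hcfs (i) : HasCompactSupport (fun p ↦ b.repr (V p) i • f p) := hfs.smul_left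
  have hexpand (p : E) : fderiv ℝ f p (V p) + divergence V p • f p =
      ∑ i, fderiv ℝ (fun q ↦ b.repr (V q) i • f q) p (b i) := by
    have hprod (i) : fderiv ℝ (fun q ↦ b.repr (V q) i • f q) p (b i) =
        b.repr (V p) i • fderiv ℝ f p (b i) +
          fderiv ℝ (fun q ↦ b.repr (V q) i) p (b i) • f p := by
      rw [fderiv_fun_smul ((hcoord i).differentiable one_ne_zero p)
        (hf.differentiable one_ne_zero p)]
      simp
    conv_lhs => rw [← b.sum_repr (V p), divergence_eq_sum b (hV.differentiable one_ne_zero p)]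
    simp only [map_sum, map_smul, Finset.sum_smul, ← Finset.sum_add_distrib, hprod]
  have hdiv : Continuous (divergence V) :=
    ((LinearMap.trace ℝ E).comp
      (ContinuousLinearMap.coeLM ℝ)).toContinuousLinearMap.continuous.comp
        (hV.continuous_fderiv one_ne_zero)
  rw [eq_neg_iff_add_eq_zero, ← integral_add, integral_congr_ae (.of_forall hexpand),
    integral_finsetSum]
  · exact Finset.sum_eq_zero fun i _ ↦ integral_fderiv_eq_zero μ (hcf i) (hcfs i) (b i)
  · exact fun i _ ↦ integrable_fderiv_apply (hcf i) (hcfs i) continuous_const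
  · exact integrable_fderiv_apply hf hfs hV.continuous
  · exact (hdiv.smul hf.continuous).integrable_of_hasCompactSupport hfs.smul_left

end Divergence

section Wirtinger

variable {E : Type*} [NormedAddCommGroup E] [NormedSpace ℝ E] {V W : E → E} {f g : E → ℂ} {p : E}

/-- The complex vector field `½ (V + i W)` applied to `f`. Its conjugate field `½ (V - i W)` is
`wirtinger V (-W)`; for `V = ∂/∂x` and `W = ∂/∂y` the two are `∂/∂z̄` and `∂/∂z`. -/
def wirtinger (V W : E → E) (f : E → ℂ) (p : E) : ℂ :=
  (1 / 2 : ℂ) * (fderiv ℝ f p (V p) + I * fderiv ℝ f p (W p))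

lemma wirtinger_neg (V W : E → E) (f : E → ℂ) (p : E) :
    wirtinger V W (fun q ↦ -f q) p = -wirtinger V W f p := by
  simp only [wirtinger, fderiv_fun_neg, neg_apply]
  ring

lemma wirtinger_add (hf : DifferentiableAt ℝ f p) (hg : DifferentiableAt ℝ g p) :
    wirtinger V W (fun q ↦ f q + g q) p = wirtinger V W f p + wirtinger V W g p := by
  simp only [wirtinger, fderiv_fun_add hf hg, add_apply]
  ring

lemma wirtinger_mul (hf : DifferentiableAt ℝ f p) (hg : DifferentiableAt ℝ g p) :
    wirtinger V W (fun q ↦ f q * g q) p = wirtinger V W f p * g p + f p * wirtinger V W g p := by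
  simp only [wirtinger, fderiv_fun_mul hf hg, add_apply, smul_apply, smul_eq_mul]
  ring

lemma wirtinger_conj (V W : E → E) (f : E → ℂ) (p : E) :
    wirtinger V W (fun q ↦ conj (f q)) p = conj (wirtinger V (-W) f p) := by
  have hconj (v : E) : fderiv ℝ (fun q ↦ conj (f q)) p v = conj (fderiv ℝ f p v) :=
    congrArg (· v) (conjCLE.comp_fderiv (f := f) (x := p))
  simp only [wirtinger, hconj, Pi.neg_apply, map_neg, map_mul, map_add, conj_I, map_div₀, map_one,
    map_ofNat]
  ring

lemma wirtinger_exp {φ : E → ℝ} (hφ : DifferentiableAt ℝ φ p) :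
    wirtinger V W (fun q ↦ (Real.exp (φ q) : ℂ)) p =
      wirtinger V W (fun q ↦ (φ q : ℂ)) p * Real.exp (φ p) := by
  have hφ' : DifferentiableAt ℝ (fun q ↦ (φ q : ℂ)) p := ofRealCLM.differentiableAt.comp p hφ
  simp only [ofReal_exp, wirtinger, hφ'.hasFDerivAt.cexp.fderiv, smul_apply, smul_eq_mul]
  ring

lemma contDiff_wirtinger {n : ℕ∞} (hV : ContDiff ℝ n V) (hW : ContDiff ℝ n W)
    (hf : ContDiff ℝ (n + 1) f) : ContDiff ℝ n (wirtinger V W f) :=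
  contDiff_const.mul ((contDiff_fderiv_apply hf hV).add
    (contDiff_const.mul (contDiff_fderiv_apply hf hW)))

lemma hasCompactSupport_wirtinger (V W : E → E) (hf : HasCompactSupport f) :
    HasCompactSupport (wirtinger V W f) :=
  (hf.fderiv ℝ).mono fun p hp hfp ↦ hp (by simp [wirtinger, hfp])

lemma fderiv_wirtinger (hV : ContDiff ℝ 1 V) (hW : ContDiff ℝ 1 W) (hf : ContDiff ℝ 2 f)
    (p v : E) :
    fderiv ℝ (wirtinger V W f) p v = (1 / 2 : ℂ) * (fderiv ℝ (fun q ↦ fderiv ℝ f q (V q)) p v +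
      I * fderiv ℝ (fun q ↦ fderiv ℝ f q (W q)) p v) := by
  have hdiff {X : E → E} (hX : ContDiff ℝ 1 X) :
      DifferentiableAt ℝ (fun q ↦ fderiv ℝ f q (X q)) p :=
    (contDiff_fderiv_apply (n := 1) hf hX).differentiable one_ne_zero p
  exact congrArg (· v) (((hdiff hV).hasFDerivAt.add
    ((hdiff hW).hasFDerivAt.const_mul I)).const_mul (1 / 2 : ℂ)).fderiv

theorem wirtinger_commutator (hV : ContDiff ℝ 1 V) (hW : ContDiff ℝ 1 W) (hf : ContDiff ℝ 2 f)
    (p : E) :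
    wirtinger V W (wirtinger V (-W) f) p - wirtinger V (-W) (wirtinger V W f) p =
      -(I / 2) * fderiv ℝ f p (lieBracket ℝ V W p) := by
  rw [fderiv_apply_lieBracket hf.contDiffAt (by simp) (hW.differentiable one_ne_zero p)
    (hV.differentiable one_ne_zero p)]
  rw [wirtinger.eq_1 V W, wirtinger.eq_1 V (-W) (wirtinger V W f)]
  simp only [fderiv_wirtinger hV hW hf, fderiv_wirtinger (W := -W) hV hW.neg hf, Pi.neg_apply,
    map_neg, fderiv_fun_neg, neg_apply]
  ring

theorem integral_wirtinger_eq_zero [FiniteDimensional ℝ E] [MeasurableSpace E] [BorelSpace E]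
    (μ : Measure E) [μ.IsAddHaarMeasure] (hV : ContDiff ℝ 1 V) (hW : ContDiff ℝ 1 W)
    (hVdiv : divergence V = 0) (hWdiv : divergence W = 0)
    (hf : ContDiff ℝ 1 f) (hfs : HasCompactSupport f) : ∫ p, wirtinger V W f p ∂μ = 0 := by
  have hzero {X : E → E} (hX : ContDiff ℝ 1 X) (hXdiv : divergence X = 0) :
      ∫ p, fderiv ℝ f p (X p) ∂μ = 0 := by
    simp [integral_fderiv_apply_eq_neg_integral_divergence_smul μ hf hfs hX, hXdiv]
  simp only [wirtinger]
  rw [integral_const_mul, integral_add (integrable_fderiv_apply hf hfs hV.continuous)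
    ((integrable_fderiv_apply hf hfs hW.continuous).const_mul I), integral_const_mul,
    hzero hV hVdiv, hzero hW hWdiv, mul_zero, add_zero, mul_zero]

end Wirtinger

section WeightedInner

variable {E : Type*} [MeasurableSpace E] {μ : Measure E} {φ : E → ℝ}

/-- The sesquilinear pairing `∫ f ḡ e^φ dμ` of the weighted space `L²(μ, e^φ)`, linear in the first
argument. Junk value: it is `0` when the integrand is not integrable. -/
def weightedInner (μ : Measure E) (φ : E → ℝ) (f g : E → ℂ) : ℂ :=
  ∫ p, f p * conj (g p) * Real.exp (φ p) ∂μ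

lemma conj_weightedInner (f g : E → ℂ) :
    conj (weightedInner μ φ f g) = weightedInner μ φ g f := by
  simp only [weightedInner, ← integral_conj, map_mul, conj_conj, conj_ofReal, mul_comm (conj _)]

lemma weightedInner_self (f : E → ℂ) :
    weightedInner μ φ f f = (∫ p, ‖f p‖ ^ 2 * Real.exp (φ p) ∂μ : ℝ) := by
  simp only [weightedInner, mul_conj', ← ofReal_pow, ← ofReal_mul]
  exact integral_ofReal

variable [TopologicalSpace E] [OpensMeasurableSpace E] [IsFiniteMeasureOnCompacts μ] {f g : E → ℂ}

lemma integrable_weightedInner (hf : Continuous f) (hg : Continuous g) (hgs : HasCompactSupport g)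
    (hφ : Continuous φ) : Integrable (fun p ↦ f p * conj (g p) * Real.exp (φ p)) μ :=
  Continuous.integrable_of_hasCompactSupport (by fun_prop)
    (hgs.mono fun p hp hgp ↦ hp (by simp [hgp]))

lemma weightedInner_sub_left {f₁ f₂ : E → ℂ} (hf₁ : Continuous f₁) (hf₂ : Continuous f₂)
    (hg : Continuous g) (hgs : HasCompactSupport g) (hφ : Continuous φ) :
    weightedInner μ φ (fun p ↦ f₁ p - f₂ p) g =
      weightedInner μ φ f₁ g - weightedInner μ φ f₂ g := by
  simp only [weightedInner, sub_mul]
  exact integral_sub (integrable_weightedInner hf₁ hg hgs hφ)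
    (integrable_weightedInner hf₂ hg hgs hφ)

lemma weightedInner_sum_left {ι : Type*} (s : Finset ι) {f : ι → E → ℂ}
    (hf : ∀ i ∈ s, Continuous (f i)) (hg : Continuous g) (hgs : HasCompactSupport g)
    (hφ : Continuous φ) :
    weightedInner μ φ (fun p ↦ ∑ i ∈ s, f i p) g = ∑ i ∈ s, weightedInner μ φ (f i) g := by
  simp only [weightedInner, Finset.sum_mul]
  exact integral_finsetSum s fun i hi ↦ integrable_weightedInner (hf i hi) hg hgs hφ

lemma mul_integral_norm_sq_le_re_weightedInner {c : ℝ} {a : E → ℂ} (ha : Continuous a)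
    (hc : ∀ p, c ≤ (a p).re) (hf : Continuous f) (hfs : HasCompactSupport f)
    (hφ : Continuous φ) :
    c * ∫ p, ‖f p‖ ^ 2 * Real.exp (φ p) ∂μ ≤ (weightedInner μ φ (fun p ↦ a p * f p) f).re := by
  have hint := integrable_weightedInner (μ := μ) (ha.mul hf) hf hfs hφ
  have hre (p : E) : (a p * f p * conj (f p) * Real.exp (φ p)).re =
      (a p).re * (‖f p‖ ^ 2 * Real.exp (φ p)) := by
    rw [mul_assoc (a p), mul_conj', mul_assoc, ← ofReal_pow, ← ofReal_mul, re_mul_ofReal]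
  calc
    c * ∫ p, ‖f p‖ ^ 2 * Real.exp (φ p) ∂μ = ∫ p, c * (‖f p‖ ^ 2 * Real.exp (φ p)) ∂μ :=
      (integral_const_mul _ _).symm
    _ ≤ ∫ p, (a p * f p * conj (f p) * Real.exp (φ p)).re ∂μ := by
      refine integral_mono (Continuous.integrable_of_hasCompactSupport (by fun_prop)
        (hfs.mono fun p hp hfp ↦ hp (by simp [hfp]))) hint.re fun p ↦ ?_
      rw [hre]
      gcongr
      exact hc p
    _ = (weightedInner μ φ (fun p ↦ a p * f p) f).re := integral_re hint

end WeightedInner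

section WirtingerAdjoint

variable {E : Type*} [NormedAddCommGroup E] [NormedSpace ℝ E] {V W : E → E} {φ : E → ℝ}
  {f g : E → ℂ}

/-- The formal adjoint of `wirtinger V W` for `weightedInner μ φ`, when `V` and `W` are
divergence-free and `μ` is a Haar measure: `f ↦ -(L f + (L φ) f)` with `L = ½ (V - i W)`. -/
def wirtingerAdjoint (V W : E → E) (φ : E → ℝ) (f : E → ℂ) (p : E) : ℂ :=
  -(wirtinger V (-W) f p + wirtinger V (-W) (fun q ↦ (φ q : ℂ)) p * f p)

lemma contDiff_wirtingerAdjoint {n : ℕ∞} (hV : ContDiff ℝ n V) (hW : ContDiff ℝ n W)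
    (hφ : ContDiff ℝ (n + 1) φ) (hf : ContDiff ℝ (n + 1) f) :
    ContDiff ℝ n (wirtingerAdjoint V W φ f) :=
  ((contDiff_wirtinger hV hW.neg hf).add ((contDiff_wirtinger hV hW.neg
    (ofRealCLM.contDiff.comp hφ)).mul (hf.of_le le_self_add))).neg

lemma hasCompactSupport_wirtingerAdjoint (V W : E → E) (φ : E → ℝ) (hf : HasCompactSupport f) :
    HasCompactSupport (wirtingerAdjoint V W φ f) :=
  ((hasCompactSupport_wirtinger V (-W) hf).add hf.mul_left).neg

theorem wirtingerAdjoint_commutator (hV : ContDiff ℝ 1 V) (hW : ContDiff ℝ 1 W)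
    (hφ : ContDiff ℝ 2 φ) (hf : ContDiff ℝ 2 f) (p : E) :
    wirtingerAdjoint V W φ (wirtinger V W f) p - wirtinger V W (wirtingerAdjoint V W φ f) p =
      wirtinger V W (wirtinger V (-W) fun q ↦ (φ q : ℂ)) p * f p -
        I / 2 * fderiv ℝ f p (lieBracket ℝ V W p) := by
  have hL {h : E → ℂ} (hh : ContDiff ℝ 2 h) : DifferentiableAt ℝ (wirtinger V (-W) h) p :=
    (contDiff_wirtinger (n := 1) hV hW.neg hh).differentiable one_ne_zero p
  have hφL := hL (h := fun q ↦ (φ q : ℂ)) (ofRealCLM.contDiff.comp hφ)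
  have hfd : DifferentiableAt ℝ f p := hf.differentiable two_ne_zero p
  have hadjoint : wirtinger V W (wirtingerAdjoint V W φ f) p =
      -(wirtinger V W (wirtinger V (-W) f) p +
        (wirtinger V W (wirtinger V (-W) fun q ↦ (φ q : ℂ)) p * f p +
          wirtinger V (-W) (fun q ↦ (φ q : ℂ)) p * wirtinger V W f p)) := by
    rw [← wirtinger_mul hφL hfd, ← wirtinger_add (hL hf) (hφL.fun_mul hfd), ← wirtinger_neg]
    rfl
  rw [hadjoint, wirtingerAdjoint]
  linear_combination wirtinger_commutator hV hW hf p

lemma wirtinger_mul_conj_mul_exp {p : E} (hf : DifferentiableAt ℝ f p)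
    (hg : DifferentiableAt ℝ g p) (hφ : DifferentiableAt ℝ φ p) :
    wirtinger V W (fun q ↦ f q * conj (g q) * Real.exp (φ q)) p =
      wirtinger V W f p * conj (g p) * Real.exp (φ p) -
        f p * conj (wirtingerAdjoint V W φ g p) * Real.exp (φ p) := by
  have hgc : DifferentiableAt ℝ (fun q ↦ conj (g q)) p := conjCLE.differentiableAt.comp p hg
  have hφe : DifferentiableAt ℝ (fun q ↦ (Real.exp (φ q) : ℂ)) p :=
    ofRealCLM.differentiableAt.comp p hφ.exp
  have hφc : wirtinger V W (fun q ↦ (φ q : ℂ)) p =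
      conj (wirtinger V (-W) (fun q ↦ (φ q : ℂ)) p) := by
    simpa only [conj_ofReal] using wirtinger_conj V W (fun q ↦ (φ q : ℂ)) p
  rw [wirtinger_mul (hf.fun_mul hgc) hφe, wirtinger_mul hf hgc, wirtinger_conj,
    wirtinger_exp hφ, hφc, wirtingerAdjoint]
  simp only [map_neg, map_add, map_mul]
  ring

variable [FiniteDimensional ℝ E] [MeasurableSpace E] [BorelSpace E] (μ : Measure E)
  [μ.IsAddHaarMeasure]

theorem weightedInner_wirtinger_left (hV : ContDiff ℝ 1 V) (hW : ContDiff ℝ 1 W)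
    (hVdiv : divergence V = 0) (hWdiv : divergence W = 0) (hφ : ContDiff ℝ 1 φ)
    (hf : ContDiff ℝ 1 f) (hg : ContDiff ℝ 1 g) (hgs : HasCompactSupport g) :
    weightedInner μ φ (wirtinger V W f) g = weightedInner μ φ f (wirtingerAdjoint V W φ g) := by
  have hF : ContDiff ℝ 1 (fun p ↦ f p * conj (g p) * Real.exp (φ p)) :=
    (hf.mul (conjCLE.contDiff.comp hg)).mul (ofRealCLM.contDiff.comp hφ.exp)
  have hFs : HasCompactSupport (fun p ↦ f p * conj (g p) * Real.exp (φ p)) :=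
    hgs.mono fun p hp hgp ↦ hp (by simp [hgp])
  have hLf : Continuous (wirtinger V W f) :=
    (contDiff_wirtinger (n := 0) (hV.of_le zero_le_one) (hW.of_le zero_le_one) hf).continuous
  have hLg : Continuous (wirtingerAdjoint V W φ g) := (contDiff_wirtingerAdjoint (n := 0)
    (hV.of_le zero_le_one) (hW.of_le zero_le_one) hφ hg).continuous
  have hzero := integral_wirtinger_eq_zero μ hV hW hVdiv hWdiv hF hFs
  simp only [wirtinger_mul_conj_mul_exp (hf.differentiable one_ne_zero _)
    (hg.differentiable one_ne_zero _) (hφ.differentiable one_ne_zero _)] at hzero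
  rw [integral_sub (integrable_weightedInner hLf hg.continuous hgs hφ.continuous)
    (integrable_weightedInner hf.continuous hLg
      (hasCompactSupport_wirtingerAdjoint V W φ hgs) hφ.continuous)] at hzero
  exact sub_eq_zero.mp hzero

theorem weightedInner_wirtingerAdjoint_left (hV : ContDiff ℝ 1 V) (hW : ContDiff ℝ 1 W)
    (hVdiv : divergence V = 0) (hWdiv : divergence W = 0) (hφ : ContDiff ℝ 1 φ)
    (hf : ContDiff ℝ 1 f) (hfs : HasCompactSupport f) (hg : ContDiff ℝ 1 g) :
    weightedInner μ φ (wirtingerAdjoint V W φ f) g = weightedInner μ φ f (wirtinger V W g) := by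
  rw [← conj_weightedInner, ← weightedInner_wirtinger_left μ hV hW hVdiv hWdiv hφ hg hf hfs,
    conj_weightedInner]

theorem weightedInner_wirtinger_commutator (hV : ContDiff ℝ 1 V) (hW : ContDiff ℝ 1 W)
    (hVdiv : divergence V = 0) (hWdiv : divergence W = 0) (hφ : ContDiff ℝ 2 φ)
    {u : E → ℂ} (hu : ContDiff ℝ 2 u) (hus : HasCompactSupport u) :
    weightedInner μ φ (fun p ↦ wirtingerAdjoint V W φ (wirtinger V W u) p -
        wirtinger V W (wirtingerAdjoint V W φ u) p) u =
      weightedInner μ φ (wirtinger V W u) (wirtinger V W u) -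
        weightedInner μ φ (wirtingerAdjoint V W φ u) (wirtingerAdjoint V W φ u) := by
  have hV₀ : ContDiff ℝ 0 V := hV.of_le zero_le_one
  have hW₀ : ContDiff ℝ 0 W := hW.of_le zero_le_one
  have hφ₁ : ContDiff ℝ 1 φ := hφ.of_le one_le_two
  have hu₁ : ContDiff ℝ 1 u := hu.of_le one_le_two
  have hLu : ContDiff ℝ 1 (wirtinger V W u) := contDiff_wirtinger (n := 1) hV hW hu
  have hLu' : ContDiff ℝ 1 (wirtingerAdjoint V W φ u) :=
    contDiff_wirtingerAdjoint (n := 1) hV hW hφ hu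
  rw [weightedInner_sub_left (contDiff_wirtingerAdjoint (n := 0) hV₀ hW₀ hφ₁ hLu).continuous
      (contDiff_wirtinger (n := 0) hV₀ hW₀ hLu').continuous hu.continuous hus hφ.continuous,
    weightedInner_wirtingerAdjoint_left μ hV hW hVdiv hWdiv hφ₁ hLu
      (hasCompactSupport_wirtinger V W hus) hu₁,
    weightedInner_wirtinger_left μ hV hW hVdiv hWdiv hφ₁ hLu' hu₁ hus]

end WirtingerAdjoint

section CommutatorEstimate

variable {E ι : Type*} [NormedAddCommGroup E] [NormedSpace ℝ E] [FiniteDimensional ℝ E]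
  [MeasurableSpace E] [BorelSpace E] (μ : Measure E) [μ.IsAddHaarMeasure]
  {φ : E → ℝ} {u : E → ℂ}

lemma re_weightedInner_commutator_le {V W : E → E} (hV : ContDiff ℝ 1 V) (hW : ContDiff ℝ 1 W)
    (hVdiv : divergence V = 0) (hWdiv : divergence W = 0) (hφ : ContDiff ℝ 2 φ)
    (hu : ContDiff ℝ 2 u) (hus : HasCompactSupport u) :
    (weightedInner μ φ (fun p ↦ wirtinger V W (wirtinger V (-W) fun q ↦ (φ q : ℂ)) p * u p -
        I / 2 * fderiv ℝ u p (lieBracket ℝ V W p)) u).re ≤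
      ∫ p, ‖wirtinger V W u p‖ ^ 2 * Real.exp (φ p) ∂μ := by
  have hnonneg : 0 ≤ ∫ p, ‖wirtingerAdjoint V W φ u p‖ ^ 2 * Real.exp (φ p) ∂μ :=
    integral_nonneg fun p ↦ by positivity
  simp only [← wirtingerAdjoint_commutator hV hW hφ hu,
    weightedInner_wirtinger_commutator μ hV hW hVdiv hWdiv hφ hu hus, weightedInner_self,
    sub_re, ofReal_re]
  linarith

theorem mul_integral_norm_sq_le_sum_integral_norm_sq_wirtinger [Fintype ι] {V W : ι → E → E}
    (hV : ∀ j, ContDiff ℝ 1 (V j)) (hW : ∀ j, ContDiff ℝ 1 (W j))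
    (hVdiv : ∀ j, divergence (V j) = 0) (hWdiv : ∀ j, divergence (W j) = 0)
    (hbracket : ∀ p, ∑ j, lieBracket ℝ (V j) (W j) p = 0) (hφ : ContDiff ℝ 2 φ) {c : ℝ}
    (hc : ∀ p, c ≤
      (∑ j, wirtinger (V j) (W j) (wirtinger (V j) (-W j) fun q ↦ (φ q : ℂ)) p).re)
    (hu : ContDiff ℝ 2 u) (hus : HasCompactSupport u) :
    c * ∫ p, ‖u p‖ ^ 2 * Real.exp (φ p) ∂μ ≤
      ∑ j, ∫ p, ‖wirtinger (V j) (W j) u p‖ ^ 2 * Real.exp (φ p) ∂μ := by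
  let a (j : ι) : E → ℂ := wirtinger (V j) (W j) (wirtinger (V j) (-W j) fun q ↦ (φ q : ℂ))
  let C (j : ι) (p : E) : ℂ := a j p * u p - I / 2 * fderiv ℝ u p (lieBracket ℝ (V j) (W j) p)
  have ha (j : ι) : Continuous (a j) :=
    (contDiff_wirtinger (n := 0) ((hV j).of_le zero_le_one) ((hW j).of_le zero_le_one)
      (contDiff_wirtinger (n := 1) (hV j) (hW j).neg (ofRealCLM.contDiff.comp hφ))).continuous
  have hC (j : ι) : Continuous (C j) :=
    ((ha j).mul hu.continuous).sub (continuous_const.mul ((hu.continuous_fderiv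
      two_ne_zero).clm_apply ((hV j).lieBracket_vectorField (m := 0) (hW j) le_rfl).continuous))
  have hsum (p : E) : (∑ j, a j p) * u p = ∑ j, C j p := by
    simp only [C, Finset.sum_sub_distrib, ← Finset.mul_sum, ← Finset.sum_mul, ← map_sum, hbracket,
      map_zero, mul_zero, sub_zero]
  calc
    c * ∫ p, ‖u p‖ ^ 2 * Real.exp (φ p) ∂μ
      ≤ (weightedInner μ φ (fun p ↦ (∑ j, a j p) * u p) u).re :=
      mul_integral_norm_sq_le_re_weightedInner (continuous_finsetSum _ fun j _ ↦ ha j) hc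
        hu.continuous hus hφ.continuous
    _ = ∑ j, (weightedInner μ φ (C j) u).re := by
      simp only [hsum, weightedInner_sum_left _ (fun j _ ↦ hC j) hu.continuous hus hφ.continuous,
        re_sum]
    _ ≤ ∑ j, ∫ p, ‖wirtinger (V j) (W j) u p‖ ^ 2 * Real.exp (φ p) ∂μ :=
      Finset.sum_le_sum fun j _ ↦ re_weightedInner_commutator_le μ (hV j) (hW j) (hVdiv j)
        (hWdiv j) hφ hu hus

end CommutatorEstimate

section Coordinates

variable {ι : Type*}

lemma hasFDerivAt_coord (j : ι) (p : (ι → ℂ) × ℝ) :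
    HasFDerivAt (fun q : (ι → ℂ) × ℝ ↦ q.1 j)
      (ContinuousLinearMap.proj (R := ℝ) (φ := fun _ : ι ↦ ℂ) j ∘L
        ContinuousLinearMap.fst ℝ (ι → ℂ) ℝ) p :=
  (ContinuousLinearMap.proj (R := ℝ) (φ := fun _ : ι ↦ ℂ) j ∘L
    ContinuousLinearMap.fst ℝ (ι → ℂ) ℝ).hasFDerivAt

lemma fderiv_coord_apply (j : ι) (p v : (ι → ℂ) × ℝ) :
    fderiv ℝ (fun q : (ι → ℂ) × ℝ ↦ q.1 j) p v = v.1 j := by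
  rw [(hasFDerivAt_coord j p).fderiv]
  rfl

variable [Fintype ι]

lemma fderiv_sum_normSq_apply (p v : (ι → ℂ) × ℝ) :
    fderiv ℝ (fun q : (ι → ℂ) × ℝ ↦ ((∑ i, normSq (q.1 i) : ℝ) : ℂ)) p v =
      ∑ i, (p.1 i * conj (v.1 i) + v.1 i * conj (p.1 i)) := by
  have hconj (i : ι) : HasFDerivAt (fun q : (ι → ℂ) × ℝ ↦ conj (q.1 i)) _ p :=
    conjCLE.hasFDerivAt.comp p (hasFDerivAt_coord i p)
  simp only [ofReal_sum, ← mul_conj]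
  rw [(HasFDerivAt.fun_sum fun i _ ↦ (hasFDerivAt_coord i p).fun_mul (hconj i)).fderiv]
  simp [mul_comm]

lemma contDiff_sum_normSq {n : ℕ∞} :
    ContDiff ℝ n (fun p : (ι → ℂ) × ℝ ↦ ∑ i, normSq (p.1 i)) := by
  simp only [normSq_eq_norm_sq]
  exact ContDiff.sum fun i _ ↦ ((contDiff_apply ℝ ℂ i).comp contDiff_fst).norm_sq ℝ

end Coordinates

section TangentialCR

variable {ι : Type*} [DecidableEq ι] (ε : ι → ℝ) (j : ι)

/-- The real vector field `∂/∂x_j + 2 ε_j y_j ∂/∂x` on `ℂ^ι × ℝ`, where `z_j = x_j + i y_j`: the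
real part of `2 L̄_j`, with `L̄_j = ∂/∂z̄_j - i ε_j z_j ∂/∂x`. -/
def crFieldRe (p : (ι → ℂ) × ℝ) : (ι → ℂ) × ℝ :=
  (Pi.single j 1, 2 * ε j * (p.1 j).im)

/-- The real vector field `∂/∂y_j - 2 ε_j x_j ∂/∂x` on `ℂ^ι × ℝ`, where `z_j = x_j + i y_j`: the
imaginary part of `2 L̄_j`, with `L̄_j = ∂/∂z̄_j - i ε_j z_j ∂/∂x`. -/
def crFieldIm (p : (ι → ℂ) × ℝ) : (ι → ℂ) × ℝ :=
  (Pi.single j I, -(2 * ε j * (p.1 j).re))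

lemma fderiv_crFieldRe_apply [Finite ι] (p v : (ι → ℂ) × ℝ) :
    fderiv ℝ (crFieldRe ε j) p v = (0, 2 * ε j * (v.1 j).im) := by
  have := Fintype.ofFinite ι
  have hderiv := (hasFDerivAt_const (Pi.single j 1 : ι → ℂ) p).prodMk
    ((imCLM.hasFDerivAt.comp p (hasFDerivAt_coord j p)).const_mul (2 * ε j))
  exact DFunLike.congr_fun hderiv.fderiv v

lemma fderiv_crFieldIm_apply [Finite ι] (p v : (ι → ℂ) × ℝ) :
    fderiv ℝ (crFieldIm ε j) p v = (0, -(2 * ε j * (v.1 j).re)) := by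
  have := Fintype.ofFinite ι
  have hderiv := (hasFDerivAt_const (Pi.single j I : ι → ℂ) p).prodMk
    ((reCLM.hasFDerivAt.comp p (hasFDerivAt_coord j p)).const_mul (2 * ε j)).neg
  exact DFunLike.congr_fun hderiv.fderiv v

variable [Fintype ι]

lemma contDiff_crFieldRe {n : ℕ∞} : ContDiff ℝ n (crFieldRe ε j) :=
  contDiff_const.prodMk (contDiff_const.mul
    (imCLM.contDiff.comp ((contDiff_apply ℝ ℂ j).comp contDiff_fst)))

lemma contDiff_crFieldIm {n : ℕ∞} : ContDiff ℝ n (crFieldIm ε j) :=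
  contDiff_const.prodMk (contDiff_const.mul
    (reCLM.contDiff.comp ((contDiff_apply ℝ ℂ j).comp contDiff_fst))).neg

lemma divergence_crFieldRe : divergence (crFieldRe ε j) = 0 := by
  ext p
  have hrankOne : (fderiv ℝ (crFieldRe ε j) p : (ι → ℂ) × ℝ →ₗ[ℝ] (ι → ℂ) × ℝ) =
      ((2 * ε j) • imLm ∘ₗ LinearMap.proj j ∘ₗ LinearMap.fst ℝ (ι → ℂ) ℝ).smulRight (0, 1) := by
    refine LinearMap.ext fun v ↦ ?_
    simp [fderiv_crFieldRe_apply]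
  simp [divergence, hrankOne]

lemma divergence_crFieldIm : divergence (crFieldIm ε j) = 0 := by
  ext p
  have hrankOne : (fderiv ℝ (crFieldIm ε j) p : (ι → ℂ) × ℝ →ₗ[ℝ] (ι → ℂ) × ℝ) =
      (-(2 * ε j) • reLm ∘ₗ LinearMap.proj j ∘ₗ LinearMap.fst ℝ (ι → ℂ) ℝ).smulRight (0, 1) := by
    refine LinearMap.ext fun v ↦ ?_
    simp [fderiv_crFieldIm_apply]
  simp [divergence, hrankOne]

lemma lieBracket_crFieldRe_crFieldIm (p : (ι → ℂ) × ℝ) :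
    lieBracket ℝ (crFieldRe ε j) (crFieldIm ε j) p = (0, -4 * ε j) := by
  simp only [lieBracket, fderiv_crFieldRe_apply, fderiv_crFieldIm_apply]
  simp only [crFieldRe, crFieldIm, Pi.single_eq_same, one_re, I_im, mul_one, Prod.mk_sub_mk,
    sub_self, Prod.mk.injEq, true_and]
  ring

lemma wirtinger_crField (f : (ι → ℂ) × ℝ → ℂ) (p : (ι → ℂ) × ℝ) :
    wirtinger (crFieldRe ε j) (crFieldIm ε j) f p =
      (1 / 2 : ℂ) * (fderiv ℝ f p (Pi.single j 1, 0) + I * fderiv ℝ f p (Pi.single j I, 0)) -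
        I * ε j * p.1 j * fderiv ℝ f p (0, 1) := by
  have hsplit (z : ι → ℂ) (t : ℝ) : fderiv ℝ f p (z, t) =
      fderiv ℝ f p (z, 0) + t * fderiv ℝ f p (0, 1) := by
    rw [← real_smul, ← map_smul, ← map_add]
    simp
  rw [wirtinger, crFieldRe, crFieldIm, hsplit _ (2 * _ * _), hsplit _ (-_)]
  push_cast
  linear_combination (-I * ε j * fderiv ℝ f p (0, 1)) * re_add_im (p.1 j) +
    (ε j * (p.1 j).im * fderiv ℝ f p (0, 1)) * I_sq

lemma wirtinger_crField_conj_coord (p : (ι → ℂ) × ℝ) :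
    wirtinger (crFieldRe ε j) (crFieldIm ε j) (fun q ↦ conj (q.1 j)) p = 1 := by
  have hcoord : wirtinger (crFieldRe ε j) (-crFieldIm ε j) (fun q ↦ q.1 j) p = 1 := by
    simp only [wirtinger, fderiv_coord_apply, crFieldRe, Pi.neg_apply, crFieldIm, Prod.fst_neg,
      Pi.single_eq_same, mul_neg, I_mul_I]
    norm_num
  rw [wirtinger_conj, hcoord, map_one]

lemma wirtinger_crField_sum_normSq (p : (ι → ℂ) × ℝ) :
    wirtinger (crFieldRe ε j) (-crFieldIm ε j) (fun q ↦ ((∑ i, normSq (q.1 i) : ℝ) : ℂ)) p =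
      conj (p.1 j) := by
  have hsingle (c : ℂ) (t : ℝ) :
      fderiv ℝ (fun q : (ι → ℂ) × ℝ ↦ ((∑ i, normSq (q.1 i) : ℝ) : ℂ)) p (Pi.single j c, t) =
        p.1 j * conj c + c * conj (p.1 j) := by
    rw [fderiv_sum_normSq_apply, Finset.sum_eq_single j]
    · simp
    · intro i _ hij
      simp [hij]
    · simp
  simp only [wirtinger, Pi.neg_apply, map_neg, crFieldRe, crFieldIm, hsingle, map_one, conj_I]
  linear_combination ((p.1 j - conj (p.1 j)) / 2) * I_sq

theorem tangential_CR_function_estimate_general (hε : ∑ j, ε j = 0) {u : (ι → ℂ) × ℝ → ℂ}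
    (hu : ContDiff ℝ 2 u) (hus : HasCompactSupport u) :
    Fintype.card ι * ∫ p, ‖u p‖ ^ 2 * Real.exp (∑ i, normSq (p.1 i)) ≤
      ∑ j, ∫ p, ‖wirtinger (crFieldRe ε j) (crFieldIm ε j) u p‖ ^ 2 *
        Real.exp (∑ i, normSq (p.1 i)) := by
  have : (volume : Measure ((ι → ℂ) × ℝ)).IsAddHaarMeasure :=
    Measure.prod.instIsAddHaarMeasure volume volume
  have hbracket (p : (ι → ℂ) × ℝ) :
      ∑ j, lieBracket ℝ (crFieldRe ε j) (crFieldIm ε j) p = 0 := by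
    simp only [lieBracket_crFieldRe_crFieldIm, Prod.ext_iff, Prod.fst_sum, Prod.snd_sum,
      Finset.sum_const_zero, ← Finset.mul_sum, hε, mul_zero, Prod.fst_zero, Prod.snd_zero, and_self]
  refine mul_integral_norm_sq_le_sum_integral_norm_sq_wirtinger volume
    (fun j ↦ contDiff_crFieldRe ε j) (fun j ↦ contDiff_crFieldIm ε j)
    (fun j ↦ divergence_crFieldRe ε j) (fun j ↦ divergence_crFieldIm ε j) hbracket
    contDiff_sum_normSq (fun p ↦ ?_) hu hus
  simp only [funext (wirtinger_crField_sum_normSq ε _), wirtinger_crField_conj_coord]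
  simp

end TangentialCR

theorem tangential_CR_function_estimate
    (u : (Fin 4 → ℂ) × ℝ → ℂ)
    (hu : ContDiff ℝ (⊤ : ℕ∞) u) (hucs : HasCompactSupport u) :
    4 * ∫ p : (Fin 4 → ℂ) × ℝ, ‖u p‖ ^ 2 * wgtP p
      ≤ ∑ j, ∫ p : (Fin 4 → ℂ) × ℝ, ‖Lbar j u p‖ ^ 2 * wgtP p := by
  have hsum : ∑ j, eps j = 0 := by simp [eps, Fin.sum_univ_four]
  have hu₂ : ContDiff ℝ 2 u := hu.of_le (WithTop.coe_le_coe.2 le_top)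
  simpa only [Lbar, wbarP, dxP, wgtP, wirtinger_crField, Fintype.card_fin, Nat.cast_ofNat] using
    tangential_CR_function_estimate_general eps hsum hu₂ hucs
end
end
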